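/- arXiv:2304.10126 — 5 statements merged into one kernel-verified Lean document; each statement's English description precedes it below -/
import Mathlib

section
/- Let P ∈ R^{n×n} be symmetric and X ∈ R^{n×d} with singular value decomposition X = U_k Σ_k V_k^T + U_e Σ_e V_e^T, where U_k ∈ R^{n×k}, U_e ∈ R^{n×e}, V_k ∈ R^{d×k}, V_e ∈ R^{d×e} have orthonormal columns with U_k^T U_e = 0 and V_k^T V_e = 0, and Σ_k ∈ R^{k×k} is diagonal and invertible, Σ_e ∈ R^{e×e} is diagonal. Set E = P − X X^T. If W ∈ R^{d×k} satisfies V_k^T W = Σ_k^{-2} and V_e^T W = 0, then with H = P X W: H H^T − P = E U_k U_k^T + U_k U_k^T E + E U_k Σ_k^{-2} U_k^T E − U_e Σ_e² U_e^T − E. -/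
open Matrix

/-- Exact expansion of H Hᵀ − P for the linear GNN module H = P X W with
W chosen so that Vₖᵀ W = Σₖ⁻² and Vₑᵀ W = 0, where
X = Uₖ Σₖ Vₖᵀ + Uₑ Σₑ Vₑᵀ is an SVD split and E = P − X Xᵀ. -/
theorem HHT_sub_P_expansion
    {n d k e : ℕ}
    (P : Matrix (Fin n) (Fin n) ℝ) (hP : Pᵀ = P)
    (X : Matrix (Fin n) (Fin d) ℝ)
    (Uk : Matrix (Fin n) (Fin k) ℝ) (Ue : Matrix (Fin n) (Fin e) ℝ)
    (Vk : Matrix (Fin d) (Fin k) ℝ) (Ve : Matrix (Fin d) (Fin e) ℝ)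
    (sk : Fin k → ℝ) (se : Fin e → ℝ)
    (hUk : Ukᵀ * Uk = 1) (hUe : Ueᵀ * Ue = 1) (hUkUe : Ukᵀ * Ue = 0)
    (hVk : Vkᵀ * Vk = 1) (hVe : Veᵀ * Ve = 1) (hVkVe : Vkᵀ * Ve = 0)
    (hsk : ∀ i, sk i ≠ 0)
    (hX : X = Uk * Matrix.diagonal sk * Vkᵀ + Ue * Matrix.diagonal se * Veᵀ)
    (W : Matrix (Fin d) (Fin k) ℝ)
    (hW1 : Vkᵀ * W = Matrix.diagonal (fun i => (sk i ^ 2)⁻¹))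
    (hW2 : Veᵀ * W = 0) :
    let E : Matrix (Fin n) (Fin n) ℝ := P - X * Xᵀ
    let H : Matrix (Fin n) (Fin k) ℝ := P * X * W
    H * Hᵀ - P =
      E * Uk * Ukᵀ + Uk * Ukᵀ * E
        + E * Uk * Matrix.diagonal (fun i => (sk i ^ 2)⁻¹) * Ukᵀ * E
        - Ue * Matrix.diagonal (fun i => se i ^ 2) * Ueᵀ - E := by
  intro E H
  have hVeVk : Veᵀ * Vk = 0 := by
    have := congrArg Matrix.transpose hVkVe
    simpa [Matrix.transpose_mul] using this
  have hUeUk : Ueᵀ * Uk = 0 := by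
    have := congrArg Matrix.transpose hUkUe
    simpa [Matrix.transpose_mul] using this
  set J : Matrix (Fin k) (Fin k) ℝ := Matrix.diagonal (fun i => (sk i ^ 2)⁻¹) with hJ
  set D : Matrix (Fin k) (Fin k) ℝ := Matrix.diagonal sk with hD
  set F : Matrix (Fin e) (Fin e) ℝ := Matrix.diagonal se with hF
  have hDt : Dᵀ = D := by simp [hD]
  have hFt : Fᵀ = F := by simp [hF]
  have hJt : Jᵀ = J := by simp [hJ]
  have hFF : Matrix.diagonal (fun i => se i ^ 2) = F * F := by
    simp [hF, Matrix.diagonal_mul_diagonal, sq]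
  have hDJ : D * J * (D * J) = J * 1 := by
    rw [hD, hJ, Matrix.diagonal_mul_diagonal, Matrix.diagonal_mul_diagonal, Matrix.mul_one]
    congr 1; funext i; have := hsk i; field_simp
  have hDDJ : D * D * J = 1 := by
    rw [hD, hJ, Matrix.diagonal_mul_diagonal, Matrix.diagonal_mul_diagonal,
      ← Matrix.diagonal_one]
    congr 1; funext i; have := hsk i; field_simp
  have hJDD : J * (D * D) = 1 := by
    rw [hD, hJ, Matrix.diagonal_mul_diagonal, Matrix.diagonal_mul_diagonal,
      ← Matrix.diagonal_one]
    congr 1; funext i; have := hsk i; field_simp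
  have hJD : J * D = D * J := by
    simp [hD, hJ, Matrix.diagonal_mul_diagonal, mul_comm]
  have hXW : X * W = Uk * (D * J) := by
    rw [hX, Matrix.add_mul, Matrix.mul_assoc _ Vkᵀ, Matrix.mul_assoc _ Veᵀ, hW1, hW2]
    simp [Matrix.mul_assoc]
  have hXX : X * Xᵀ = Uk * (D * D) * Ukᵀ + Ue * (F * F) * Ueᵀ := by
    have hXt : Xᵀ = Vk * (D * Ukᵀ) + Ve * (F * Ueᵀ) := by
      rw [hX]; simp [Matrix.transpose_mul, hDt, hFt]
    have h1 : Vkᵀ * Xᵀ = D * Ukᵀ := by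
      rw [hXt, Matrix.mul_add, ← Matrix.mul_assoc _ Vk, ← Matrix.mul_assoc _ Ve, hVk, hVkVe]; simp
    have h2 : Veᵀ * Xᵀ = F * Ueᵀ := by
      rw [hXt, Matrix.mul_add, ← Matrix.mul_assoc _ Vk, ← Matrix.mul_assoc _ Ve, hVe, hVeVk]; simp
    conv_lhs => rw [show X * Xᵀ = (Uk * D * Vkᵀ + Ue * F * Veᵀ) * Xᵀ by rw [← hX]]
    rw [Matrix.add_mul, Matrix.mul_assoc _ Vkᵀ, Matrix.mul_assoc _ Veᵀ, h1, h2]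
    simp only [Matrix.mul_assoc]
  have hPE : P = E + (Uk * (D * D) * Ukᵀ + Ue * (F * F) * Ueᵀ) := by
    rw [← hXX]; simp [E]
  have hEt : Eᵀ = E := by
    simp [E, Matrix.transpose_sub, hP]
  have hPU : P * Uk = E * Uk + Uk * (D * D) := by
    conv_lhs => rw [hPE]
    rw [Matrix.add_mul, Matrix.add_mul, Matrix.mul_assoc _ Ukᵀ, Matrix.mul_assoc _ Ueᵀ,
      hUk, hUeUk]
    simp
  have hUP : Ukᵀ * P = Ukᵀ * E + D * D * Ukᵀ := by
    have := congrArg Matrix.transpose hPU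
    simpa [Matrix.transpose_mul, hP, hEt, hDt] using this
  have hHH : H * Hᵀ = (P * Uk) * J * (Ukᵀ * P) := by
    have hH : H = P * Uk * (D * J) := by
      simp only [H]; rw [Matrix.mul_assoc P X W, hXW, Matrix.mul_assoc]
    have hHt : Hᵀ = (D * J) * (Ukᵀ * P) := by
      rw [hH, Matrix.transpose_mul, Matrix.transpose_mul, Matrix.transpose_mul, hP, hDt, hJt, hJD]
    rw [hHt, hH, ← Matrix.mul_assoc, Matrix.mul_assoc (P * Uk), hDJ, Matrix.mul_one]
  have hA : (P * Uk) * J = E * Uk * J + Uk := by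
    rw [hPU, Matrix.add_mul, Matrix.mul_assoc Uk, hDDJ, Matrix.mul_one]
  have hB : E * Uk * J * (D * D * Ukᵀ) = E * Uk * Ukᵀ := by
    rw [Matrix.mul_assoc (E * Uk) J, ← Matrix.mul_assoc J, hJDD, Matrix.one_mul]
  rw [hHH, hA, hUP, Matrix.add_mul, Matrix.mul_add, Matrix.mul_add, hB, hFF]
  conv_lhs => rw [hPE]
  simp only [← Matrix.mul_assoc]
  abel
end

section
/- Let P ∈ R^{n×n} be symmetric and X ∈ R^{n×d} of rank r ≤ k with singular value decomposition X = U_r Σ_r V_r^T, where U_r ∈ R^{n×r} and V_r ∈ R^{d×r} have orthonormal columns and Σ_r ∈ R^{r×r} is diagonal and invertible. Set E = P − X X^T. If W ∈ R^{d×k} satisfies V_r^T W [restricted to its first r columns as W = [W_r; 0] with V_r^T W_r = Σ_r^{-2}] then with H = P X W: H H^T − P = E U_r U_r^T + U_r U_r^T E + E U_r Σ_r^{-2} U_r^T E − E. -/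
open Matrix

/-- Exact expansion of H Hᵀ − P for the linear GNN module H = P X W when
X = Uᵣ Σᵣ Vᵣᵀ has rank r ≤ k and W = [Wᵣ; 0] with Vᵣᵀ Wᵣ = Σᵣ⁻², where
E = P − X Xᵀ. -/
theorem HHT_sub_P_expansion_low_rank
    {n d k r : ℕ} (hr : r ≤ k)
    (P : Matrix (Fin n) (Fin n) ℝ) (hP : Pᵀ = P)
    (X : Matrix (Fin n) (Fin d) ℝ)
    (Ur : Matrix (Fin n) (Fin r) ℝ) (Vr : Matrix (Fin d) (Fin r) ℝ)
    (sr : Fin r → ℝ)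
    (hUr : Urᵀ * Ur = 1) (hVr : Vrᵀ * Vr = 1)
    (hsr : ∀ i, sr i ≠ 0)
    (hX : X = Ur * Matrix.diagonal sr * Vrᵀ)
    (hrank : X.rank = r)
    (W : Matrix (Fin d) (Fin k) ℝ) (Wr : Matrix (Fin d) (Fin r) ℝ)
    (hWr : Vrᵀ * Wr = Matrix.diagonal (fun i => (sr i ^ 2)⁻¹))
    (hW : W = Matrix.of fun (i : Fin d) (j : Fin k) =>
      if h : (j : ℕ) < r then Wr i ⟨(j : ℕ), h⟩ else 0) :
    let E : Matrix (Fin n) (Fin n) ℝ := P - X * Xᵀ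
    let H : Matrix (Fin n) (Fin k) ℝ := P * X * W
    H * Hᵀ - P =
      E * Ur * Urᵀ + Ur * Urᵀ * E
        + E * Ur * Matrix.diagonal (fun i => (sr i ^ 2)⁻¹) * Urᵀ * E
        - E := by
  intro E H
  have hWW : W * Wᵀ = Wr * Wrᵀ := by
    obtain ⟨m, rfl⟩ := Nat.exists_eq_add_of_le hr
    subst hW
    ext i j
    simp [Matrix.mul_apply, Fin.sum_univ_add]
  set D := Matrix.diagonal (fun i => (sr i ^ 2)⁻¹) with hD
  set S := Matrix.diagonal sr with hS
  have hSt : Sᵀ = S := by simp [hS]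
  have hDt : Dᵀ = D := by simp [hD]
  have hSDDS : S * D * (D * S) = D := by
    simp only [hS, hD, Matrix.diagonal_mul_diagonal]
    congr 1
    ext i
    have := hsr i
    field_simp
  have hSSD : S * S * D = 1 := by
    simp only [hS, hD, Matrix.diagonal_mul_diagonal, ← Matrix.diagonal_one]
    congr 1
    ext i
    have := hsr i
    field_simp
  have hDSS : D * (S * S) = 1 := by
    simp only [hS, hD, Matrix.diagonal_mul_diagonal, ← Matrix.diagonal_one]
    congr 1
    ext i
    have := hsr i
    field_simp
  have hXX : X * Xᵀ = Ur * (S * S) * Urᵀ := by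
    rw [hX]
    simp only [Matrix.transpose_mul, Matrix.transpose_transpose, hSt]
    calc Ur * S * Vrᵀ * (Vr * (S * Urᵀ)) = Ur * S * (Vrᵀ * Vr) * (S * Urᵀ) := by
          simp only [Matrix.mul_assoc]
      _ = _ := by rw [hVr]; simp only [Matrix.mul_assoc, Matrix.mul_one, Matrix.one_mul]
  have hXW : X * Wr = Ur * (S * D) := by
    rw [hX, Matrix.mul_assoc, hWr, Matrix.mul_assoc]
  have hHH : H * Hᵀ = P * Ur * D * (Urᵀ * P) := by
    calc H * Hᵀ = P * X * (W * Wᵀ) * (Xᵀ * Pᵀ) := by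
          simp only [H, Matrix.transpose_mul, Matrix.mul_assoc]
      _ = P * (X * Wr) * ((X * Wr)ᵀ * P) := by
          rw [hWW, hP]; simp only [Matrix.transpose_mul, Matrix.mul_assoc]
      _ = P * Ur * (S * D * (D * S)) * (Urᵀ * P) := by
          rw [hXW]; simp only [Matrix.transpose_mul, hSt, hDt, Matrix.mul_assoc]
      _ = _ := by rw [hSDDS]
  have hPE : P = E + Ur * (S * S) * Urᵀ := by
    simp only [E, hXX, sub_add_cancel]
  have hPU : P * Ur = E * Ur + Ur * (S * S) := by
    rw [hPE, Matrix.add_mul, Matrix.mul_assoc _ Urᵀ, hUr, Matrix.mul_one]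
  have hUP : Urᵀ * P = Urᵀ * E + S * S * Urᵀ := by
    rw [hPE, Matrix.mul_add, Matrix.mul_assoc Ur, ← Matrix.mul_assoc Urᵀ Ur, hUr, Matrix.one_mul]
  have e1 : E * Ur * D * (S * S * Urᵀ) = E * Ur * Urᵀ := by
    rw [← Matrix.mul_assoc, Matrix.mul_assoc _ D, hDSS, Matrix.mul_one]
  have e2 : Ur * (S * S) * D = Ur := by
    rw [Matrix.mul_assoc, hSSD, Matrix.mul_one]
  have e3 : H * Hᵀ = E * Ur * D * Urᵀ * E + E * Ur * Urᵀ + Ur * Urᵀ * E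
      + Ur * (S * S) * Urᵀ := by
    rw [hHH, hPU, hUP, Matrix.add_mul, e2, Matrix.add_mul, Matrix.mul_add, e1, Matrix.mul_add]
    simp only [Matrix.mul_assoc, add_assoc]
  have e4 : Ur * (S * S) * Urᵀ = P - E := by
    simp only [E, hXX, sub_sub_cancel]
  rw [e3, e4]
  abel
end

section
/- Let P ∈ R^{n×n} be symmetric and X ∈ R^{n×d} with rank(X) > k, with singular values σ₁ ≥ σ₂ ≥ ... Let X = U_k Σ_k V_k^T + U_e Σ_e V_e^T be its SVD split into the k leading singular triples and the rest, set E = P − X X^T, ε = ‖E‖_F, Q = U_k U_k^T − (1/2) I_n, s = ⟨E Q, Q E⟩_F/‖E Q‖_F², δ = 1 − sqrt((1+s)/2), σ* = σ_{k+1}. Then with W ∈ R^{d×k} satisfying V_k^T W = Σ_k^{-2} and V_e^T W = 0, and H = P X W: ‖P − H H^T‖_F ≤ (1−δ)ε + sqrt(k)·ε²/σ_k² + sqrt(n−k)·σ*². -/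
open Matrix

/-- Frobenius norm of a real matrix: ‖M‖_F = sqrt(tr(Mᵀ M)). -/
noncomputable def frobNorm {m n : Type*} [Fintype m] [Fintype n]
    (M : Matrix m n ℝ) : ℝ :=
  Real.sqrt ((Mᵀ * M).trace)

/-- Frobenius inner product of real matrices: ⟨M, N⟩_F = tr(Mᵀ N). -/
noncomputable def frobInner {m n : Type*} [Fintype m] [Fintype n]
    (M N : Matrix m n ℝ) : ℝ :=
  (Mᵀ * N).trace


section Helpers

attribute [local instance] Matrix.frobeniusNormedAddCommGroup Matrix.frobeniusNormedSpace

theorem aux_trace {m n : Type*} [Fintype m] [Fintype n] (M : Matrix m n ℝ) :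
    (Mᵀ * M).trace = ∑ i, ∑ j, M i j ^ 2 := by
  rw [Finset.sum_comm]
  simp [Matrix.trace, Matrix.mul_apply, sq]

theorem aux_trace_nonneg {m n : Type*} [Fintype m] [Fintype n] (M : Matrix m n ℝ) :
    0 ≤ (Mᵀ * M).trace := by
  rw [aux_trace]; positivity

theorem aux_sq {m n : Type*} [Fintype m] [Fintype n] (M : Matrix m n ℝ) :
    frobNorm M ^ 2 = (Mᵀ * M).trace := Real.sq_sqrt (aux_trace_nonneg M)

theorem aux_nonneg {m n : Type*} [Fintype m] [Fintype n] (M : Matrix m n ℝ) :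
    0 ≤ frobNorm M := Real.sqrt_nonneg _

theorem aux_norm {m n : Type*} [Fintype m] [Fintype n] (M : Matrix m n ℝ) :
    frobNorm M = ‖M‖ := by
  rw [Matrix.frobenius_norm_def, frobNorm, aux_trace, Real.sqrt_eq_rpow]
  simp

theorem aux_add {m n : Type*} [Fintype m] [Fintype n] (M N : Matrix m n ℝ) :
    frobNorm (M + N) ≤ frobNorm M + frobNorm N := by
  simp only [aux_norm]; exact norm_add_le _ _

theorem aux_neg {m n : Type*} [Fintype m] [Fintype n] (M : Matrix m n ℝ) :
    frobNorm (-M) = frobNorm M := by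
  simp only [aux_norm]; exact norm_neg _

theorem aux_mul {l m n : Type*} [Fintype l] [Fintype m] [Fintype n]
    (M : Matrix l m ℝ) (N : Matrix m n ℝ) :
    frobNorm (M * N) ≤ frobNorm M * frobNorm N := by
  simp only [aux_norm]; exact Matrix.frobenius_norm_mul _ _

theorem aux_transpose {m n : Type*} [Fintype m] [Fintype n] (M : Matrix m n ℝ) :
    frobNorm Mᵀ = frobNorm M := by
  simp only [aux_norm]; exact Matrix.frobenius_norm_transpose _

theorem aux_first {n : ℕ} (E : Matrix (Fin n) (Fin n) ℝ) (hE : Eᵀ = E) (hE0 : E ≠ 0)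
    (Q : Matrix (Fin n) (Fin n) ℝ) (hQ : Qᵀ = Q) (hQQ : Q * Q = (1/4 : ℝ) • 1) :
    frobNorm (E * Q + Q * E) =
      Real.sqrt ((1 + frobInner (E * Q) (Q * E) / (frobNorm (E * Q)) ^ 2) / 2) * frobNorm E := by
  have h1 : frobNorm (E * Q) ^ 2 = frobNorm E ^ 2 / 4 := by
    rw [aux_sq, aux_sq, transpose_mul, hQ, Matrix.mul_assoc, Matrix.trace_mul_comm, hE,
      Matrix.mul_assoc, Matrix.mul_assoc, hQQ]
    simp [Matrix.trace_smul]; ring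
  have hpos : 0 < frobNorm E := by
    rw [aux_norm]; exact norm_pos_iff.mpr hE0
  have h2 : (Q * E)ᵀ = E * Q := by rw [transpose_mul, hE, hQ]
  have h2' : (E * Q)ᵀ = Q * E := by rw [transpose_mul, hE, hQ]
  have h3 : frobNorm (E * Q + Q * E) ^ 2 =
      2 * frobNorm (E * Q) ^ 2 + 2 * frobInner (E * Q) (Q * E) := by
    rw [aux_sq, aux_sq, frobInner, transpose_add, h2, h2']
    simp only [Matrix.add_mul, Matrix.mul_add, Matrix.trace_add]
    rw [Matrix.trace_mul_comm (E * Q) (Q * E)]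
    have : (E * Q * (E * Q)).trace = (Q * E * (Q * E)).trace := by
      rw [← Matrix.trace_transpose, transpose_mul, h2']
    rw [this]; ring
  have h4 : frobNorm (E * Q + Q * E) ^ 2 =
      ((1 + frobInner (E * Q) (Q * E) / (frobNorm (E * Q)) ^ 2) / 2) * frobNorm E ^ 2 := by
    rw [h3, h1]; field_simp; ring
  rw [← Real.sqrt_sq (aux_nonneg (E * Q + Q * E)), h4, Real.sqrt_mul' _ (sq_nonneg _),
    Real.sqrt_sq hpos.le]

theorem aux_EU {n k : ℕ} (E : Matrix (Fin n) (Fin n) ℝ) (hE : Eᵀ = E)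
    (U : Matrix (Fin n) (Fin k) ℝ) (hU : Uᵀ * U = 1) :
    frobNorm (E * U) ^ 2 ≤ frobNorm E ^ 2 := by
  have h := aux_trace_nonneg (E - U * (Uᵀ * E))
  have e1 : (E - U * (Uᵀ * E))ᵀ * (E - U * (Uᵀ * E)) = E * E - E * (U * (Uᵀ * E)) := by
    have : Uᵀ * (U * (Uᵀ * E)) = Uᵀ * E := by rw [← Matrix.mul_assoc, hU, Matrix.one_mul]
    simp only [transpose_sub, transpose_mul, transpose_transpose, hE, Matrix.sub_mul,
      Matrix.mul_sub, Matrix.mul_assoc, this]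
    simp
  rw [e1, Matrix.trace_sub] at h
  rw [aux_sq, aux_sq, hE, transpose_mul, hE, Matrix.trace_mul_comm]
  simp only [Matrix.mul_assoc]
  linarith

theorem aux_second {n k : ℕ} (E : Matrix (Fin n) (Fin n) ℝ) (hE : Eᵀ = E)
    (U : Matrix (Fin n) (Fin k) ℝ) (hU : Uᵀ * U = 1) (sk : Fin k → ℝ) (σ : ℝ) (hσ : 0 < σ)
    (hs : ∀ i, σ ≤ sk i) (hk : 1 ≤ k) (A : Matrix (Fin n) (Fin k) ℝ)
    (hA : A = E * U * diagonal (fun i => (sk i)⁻¹)) :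
    frobNorm (A * Aᵀ) ≤ Real.sqrt k * frobNorm E ^ 2 / σ ^ 2 := by
  have h1 : frobNorm (A * Aᵀ) ≤ frobNorm A ^ 2 := by
    refine (aux_mul _ _).trans ?_
    rw [aux_transpose, sq]
  have h2 : frobNorm A ^ 2 ≤ frobNorm (E * U) ^ 2 / σ ^ 2 := by
    rw [aux_sq, aux_sq, aux_trace, aux_trace, Finset.sum_div]
    refine Finset.sum_le_sum fun i _ => ?_
    rw [Finset.sum_div]
    refine Finset.sum_le_sum fun j _ => ?_
    rw [hA, Matrix.mul_diagonal, mul_pow, inv_pow, ← div_eq_mul_inv]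
    have := hs j
    gcongr
  have h3 : (1:ℝ) ≤ Real.sqrt k := by
    rw [Real.one_le_sqrt]; exact_mod_cast hk
  have h4 := aux_EU E hE U hU
  calc _ ≤ frobNorm (E * U) ^ 2 / σ ^ 2 := h1.trans h2
    _ ≤ _ := by
      gcongr
      nlinarith [sq_nonneg (frobNorm E)]

theorem aux_dim {n k e : ℕ} (Uk : Matrix (Fin n) (Fin k) ℝ) (Ue : Matrix (Fin n) (Fin e) ℝ)
    (hUk : Ukᵀ * Uk = 1) (hUe : Ueᵀ * Ue = 1) (hUkUe : Ukᵀ * Ue = 0) : e ≤ n - k := by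
  have h' : Ueᵀ * Uk = 0 := by
    have := congrArg transpose hUkUe
    simpa using this
  have h : (fromCols Uk Ue)ᵀ * fromCols Uk Ue = 1 := by
    rw [transpose_fromCols, fromRows_mul_fromCols, hUk, hUe, hUkUe, h', fromBlocks_one]
  have h1 := Matrix.rank_mul_le_right (fromCols Uk Ue)ᵀ (fromCols Uk Ue)
  rw [h, Matrix.rank_one] at h1
  have h2 := Matrix.rank_le_card_height (fromCols Uk Ue)
  simp at h1 h2
  omega

theorem aux_third {n e m : ℕ} (U : Matrix (Fin n) (Fin e) ℝ) (hU : Uᵀ * U = 1)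
    (se : Fin e → ℝ) (hse : ∀ i, 0 ≤ se i) (σ : ℝ) (hs : ∀ i, se i ≤ σ) (hm : e ≤ m) :
    frobNorm (U * diagonal (fun i => se i ^ 2) * Uᵀ) ≤ Real.sqrt m * σ ^ 2 := by
  have h : frobNorm (U * diagonal (fun i => se i ^ 2) * Uᵀ) ^ 2 ≤ m * (σ ^ 2) ^ 2 := by
    have e1 : Uᵀ * (U * (diagonal (fun i => se i ^ 2) * Uᵀ)) =
        diagonal (fun i => se i ^ 2) * Uᵀ := by rw [← Matrix.mul_assoc, hU, Matrix.one_mul]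
    rw [aux_sq]
    simp only [transpose_mul, transpose_transpose, diagonal_transpose, Matrix.mul_assoc, e1]
    rw [Matrix.trace_mul_comm]
    simp only [Matrix.mul_assoc, hU, Matrix.mul_one, diagonal_mul_diagonal, trace_diagonal]
    calc _ ≤ ∑ i : Fin e, (σ ^ 2) ^ 2 := by
          refine Finset.sum_le_sum fun i _ => ?_
          rw [← sq]
          have := hs i
          have := hse i
          gcongr
      _ = e * (σ ^ 2) ^ 2 := by simp
      _ ≤ _ := by gcongr
  calc _ ≤ Real.sqrt (m * (σ ^ 2) ^ 2) := Real.le_sqrt_of_sq_le h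
    _ = _ := by rw [Real.sqrt_mul' _ (sq_nonneg _), Real.sqrt_sq (sq_nonneg _)]

end Helpers

/-- Error bound for the linear GNN module H = P X W when rank(X) > k:
‖P − H Hᵀ‖_F ≤ (1−δ)ε + √k ε²/σₖ² + √(n−k) σ*². -/
theorem error_bound_rank_gt_k
    {n d k e : ℕ}
    (P : Matrix (Fin n) (Fin n) ℝ) (hP : Pᵀ = P)
    (X : Matrix (Fin n) (Fin d) ℝ)
    (Uk : Matrix (Fin n) (Fin k) ℝ) (Ue : Matrix (Fin n) (Fin e) ℝ)
    (Vk : Matrix (Fin d) (Fin k) ℝ) (Ve : Matrix (Fin d) (Fin e) ℝ)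
    (sk : Fin k → ℝ) (se : Fin e → ℝ)
    (hUk : Ukᵀ * Uk = 1) (hUe : Ueᵀ * Ue = 1) (hUkUe : Ukᵀ * Ue = 0)
    (hVk : Vkᵀ * Vk = 1) (hVe : Veᵀ * Ve = 1) (hVkVe : Vkᵀ * Ve = 0)
    (hX : X = Uk * Matrix.diagonal sk * Vkᵀ + Ue * Matrix.diagonal se * Veᵀ)
    (hsk : ∀ i, 0 < sk i) (hse : ∀ i, 0 ≤ se i)
    (horder : ∀ i j, se j ≤ sk i)
    (hrank : k < X.rank)
    (σk σstar : ℝ)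
    (hσk : IsLeast (Set.range sk) σk)
    (hσstar : IsGreatest (insert 0 (Set.range se)) σstar)
    (W : Matrix (Fin d) (Fin k) ℝ)
    (hW1 : Vkᵀ * W = Matrix.diagonal (fun i => (sk i ^ 2)⁻¹))
    (hW2 : Veᵀ * W = 0) :
    let E : Matrix (Fin n) (Fin n) ℝ := P - X * Xᵀ
    let ε : ℝ := frobNorm E
    let Q : Matrix (Fin n) (Fin n) ℝ :=
      Uk * Ukᵀ - (1/2 : ℝ) • (1 : Matrix (Fin n) (Fin n) ℝ)
    let s : ℝ := frobInner (E * Q) (Q * E) / (frobNorm (E * Q)) ^ 2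
    let δ : ℝ := 1 - Real.sqrt ((1 + s) / 2)
    E ≠ 0 →
    let H : Matrix (Fin n) (Fin k) ℝ := P * X * W
    frobNorm (P - H * Hᵀ)
      ≤ (1 - δ) * ε + Real.sqrt k * ε ^ 2 / σk ^ 2
          + Real.sqrt (n - k : ℕ) * σstar ^ 2 := by
  intro E ε Q s δ hE0 H
  have hUeUk : Ueᵀ * Uk = 0 := by
    have := congrArg transpose hUkUe
    simpa using this
  have hVeVk : Veᵀ * Vk = 0 := by
    have := congrArg transpose hVkVe
    simpa using this
  have hE : Eᵀ = E := by simp [E, hP]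
  have hQ : Qᵀ = Q := by simp [Q]
  have hPi : Uk * Ukᵀ * (Uk * Ukᵀ) = Uk * Ukᵀ := by
    rw [Matrix.mul_assoc, ← Matrix.mul_assoc Ukᵀ, hUk, Matrix.one_mul]
  have hQQ : Q * Q = (1/4 : ℝ) • 1 := by
    simp only [Q, Matrix.sub_mul, Matrix.mul_sub, hPi, Matrix.smul_mul, Matrix.mul_smul,
      Matrix.one_mul, Matrix.mul_one]
    module
  have hXX : X * Xᵀ = Uk * diagonal (fun i => sk i ^ 2) * Ukᵀ
      + Ue * diagonal (fun i => se i ^ 2) * Ueᵀ := by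
    have a1 : ∀ Y : Matrix (Fin k) (Fin n) ℝ, Vkᵀ * (Vk * Y) = Y := fun Y => by
      rw [← Matrix.mul_assoc, hVk, Matrix.one_mul]
    have a2 : ∀ Y : Matrix (Fin e) (Fin n) ℝ, Veᵀ * (Ve * Y) = Y := fun Y => by
      rw [← Matrix.mul_assoc, hVe, Matrix.one_mul]
    have a3 : ∀ Y : Matrix (Fin e) (Fin n) ℝ, Vkᵀ * (Ve * Y) = 0 := fun Y => by
      rw [← Matrix.mul_assoc, hVkVe, Matrix.zero_mul]
    have a4 : ∀ Y : Matrix (Fin k) (Fin n) ℝ, Veᵀ * (Vk * Y) = 0 := fun Y => by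
      rw [← Matrix.mul_assoc, hVeVk, Matrix.zero_mul]
    have d1 : diagonal (fun i => sk i ^ 2) = diagonal sk * diagonal sk := by
      rw [diagonal_mul_diagonal]; simp [sq]
    have d2 : diagonal (fun i => se i ^ 2) = diagonal se * diagonal se := by
      rw [diagonal_mul_diagonal]; simp [sq]
    rw [d1, d2, hX]
    simp only [transpose_add, transpose_mul, transpose_transpose, diagonal_transpose,
      Matrix.mul_add, Matrix.add_mul, Matrix.mul_assoc, a1, a2, a3, a4, Matrix.mul_zero,
      add_zero, zero_add]
  have hXW : X * W = Uk * diagonal (fun i => (sk i)⁻¹) := by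
    rw [hX, Matrix.add_mul, Matrix.mul_assoc, hW1, Matrix.mul_assoc (Ue * _), hW2, Matrix.mul_zero,
      add_zero, Matrix.mul_assoc, diagonal_mul_diagonal]
    congr 2
    funext i
    have := (hsk i).ne'
    field_simp
  have hPE : P = E + X * Xᵀ := by simp [E]
  obtain ⟨A, hA⟩ : ∃ A, A = E * Uk * diagonal (fun i => (sk i)⁻¹) := ⟨_, rfl⟩
  have hH : H = A + Uk * diagonal sk := by
    have c : X * Xᵀ * (Uk * diagonal (fun i => (sk i)⁻¹)) = Uk * diagonal sk := by
      rw [hXX, Matrix.add_mul, Matrix.mul_assoc, ← Matrix.mul_assoc Ukᵀ, hUk, Matrix.one_mul,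
        Matrix.mul_assoc (Ue * _), ← Matrix.mul_assoc Ueᵀ, hUeUk, Matrix.zero_mul,
        Matrix.mul_zero, add_zero, Matrix.mul_assoc, diagonal_mul_diagonal]
      congr 2
      funext i
      have := (hsk i).ne'
      field_simp
    show P * X * W = _
    rw [Matrix.mul_assoc, hXW, hPE, Matrix.add_mul, c, hA, Matrix.mul_assoc]
  have hAU : A * (Uk * diagonal sk)ᵀ = E * (Uk * Ukᵀ) := by
    rw [hA, transpose_mul, diagonal_transpose, Matrix.mul_assoc,
      ← Matrix.mul_assoc (diagonal _), diagonal_mul_diagonal]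
    have : (fun i => (sk i)⁻¹ * sk i) = fun _ => (1:ℝ) := by
      funext i; exact inv_mul_cancel₀ (hsk i).ne'
    rw [this, diagonal_one, Matrix.one_mul, Matrix.mul_assoc]
  have hUA : Uk * diagonal sk * Aᵀ = Uk * Ukᵀ * E := by
    have := congrArg transpose hAU
    rw [transpose_mul, transpose_transpose] at this
    rw [this]
    simp [transpose_mul, hE]
  have hUU : Uk * diagonal sk * (Uk * diagonal sk)ᵀ
      = Uk * diagonal (fun i => sk i ^ 2) * Ukᵀ := by
    rw [transpose_mul, diagonal_transpose, Matrix.mul_assoc, ← Matrix.mul_assoc (diagonal _),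
      diagonal_mul_diagonal, Matrix.mul_assoc]
    simp only [sq]
  have key : P - H * Hᵀ = -(E * Q + Q * E) + -(A * Aᵀ)
      + Ue * diagonal (fun i => se i ^ 2) * Ueᵀ := by
    rw [hH, transpose_add, Matrix.mul_add, Matrix.add_mul, Matrix.add_mul, hAU, hUA, hUU]
    have : P = E + (Uk * diagonal (fun i => sk i ^ 2) * Ukᵀ
      + Ue * diagonal (fun i => se i ^ 2) * Ueᵀ) := by rw [← hXX]; exact hPE
    rw [this]
    simp only [Q, Matrix.sub_mul, Matrix.mul_sub, Matrix.smul_mul, Matrix.mul_smul,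
      Matrix.one_mul, Matrix.mul_one]
    module
  obtain ⟨⟨i0, hi0⟩, hlow⟩ := hσk
  have hσpos : 0 < σk := hi0 ▸ hsk i0
  have hk1 : 1 ≤ k := by have := i0.2; omega
  have b1 := aux_first E hE hE0 Q hQ hQQ
  have b2 := aux_second E hE Uk hUk sk σk hσpos (fun i => hlow ⟨i, rfl⟩) hk1 A hA
  have b3 := aux_third Ue hUe se hse σstar (fun i => hσstar.2 (Or.inr ⟨i, rfl⟩))
    (aux_dim Uk Ue hUk hUe hUkUe)
  have b1' : frobNorm (E * Q + Q * E) = (1 - δ) * ε := by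
    rw [b1]; simp only [δ, s, ε]; ring
  rw [key]
  refine (aux_add _ _).trans (add_le_add ((aux_add _ _).trans ?_) b3)
  rw [aux_neg, aux_neg]
  exact add_le_add b1'.le b2
end

section
/- (Theorem 2) Let P ∈ R^{n×n} be symmetric positive semidefinite, X ∈ R^{n×d} with rank(X) > k, E = P − X X^T and ε = ‖E‖_F. Assume X X^T and E commute (equivalently, share a common orthonormal eigenbasis). Let σ* denote the (k+1)-th largest singular value of X. Then there exists W ∈ R^{d×k} such that, with H = P X W, ‖P − H H^T‖_F ≤ ε + sqrt(n−k)·σ*². -/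
open Matrix

/-- The (j+1)-th largest singular value of a real n×m matrix (0-indexed:
`svDesc M 0` is the largest), defined as 0 when j is out of range.
Singular values are the square roots of the eigenvalues of Mᴴ M. -/
noncomputable def svDesc {n m : ℕ} (M : Matrix (Fin n) (Fin m) ℝ) (j : ℕ) : ℝ :=
  if h : j < m then
    Real.sqrt ((Matrix.isHermitian_conjTranspose_mul_self M).eigenvalues
      (Tuple.sort (Matrix.isHermitian_conjTranspose_mul_self M).eigenvalues
        ⟨m - 1 - j, by omega⟩))
  else 0

lemma joint_basis {n : ℕ} (TA TP : EuclideanSpace ℝ (Fin n) →ₗ[ℝ] EuclideanSpace ℝ (Fin n))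
    (sA : TA.IsSymmetric) (sP : TP.IsSymmetric) (hc : Commute TA TP) :
    ∃ (b : OrthonormalBasis (Fin n) ℝ (EuclideanSpace ℝ (Fin n))) (a p : Fin n → ℝ),
      (∀ j, TA (b j) = a j • b j) ∧ (∀ j, TP (b j) = p j • b j) := by
  classical
  have hI := LinearMap.IsSymmetric.directSum_isInternal_of_commute sA sP hc
  have hO := LinearMap.IsSymmetric.orthogonalFamily_eigenspace_inf_eigenspace sA sP
  have hI' := DirectSum.isInternal_ne_bot_iff.2 hI
  have hfin := Submodule.finite_ne_bot_of_iSupIndep hI.submodule_iSupIndep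
  let _ : Fintype {i : ℝ × ℝ // (Module.End.eigenspace TA i.2 ⊓ Module.End.eigenspace TP i.1) ≠ ⊥} :=
    hfin.fintype
  have hO' := hO.comp (f := fun i : {i : ℝ × ℝ //
    (Module.End.eigenspace TA i.2 ⊓ Module.End.eigenspace TP i.1) ≠ ⊥} => i.1)
    Subtype.val_injective
  have hn : Module.finrank ℝ (EuclideanSpace ℝ (Fin n)) = n := by simp
  have hb := fun j => hI'.subordinateOrthonormalBasis_subordinate hn j hO'
  exact ⟨hI'.subordinateOrthonormalBasis hn hO',
    fun j => (hI'.subordinateOrthonormalBasisIndex hn j hO').1.2,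
    fun j => (hI'.subordinateOrthonormalBasisIndex hn j hO').1.1,
    fun j => Module.End.mem_eigenspace_iff.1 (hb j).1,
    fun j => Module.End.mem_eigenspace_iff.1 (hb j).2⟩

lemma joint_diag {n : ℕ} (A P : Matrix (Fin n) (Fin n) ℝ) (hA : A.IsHermitian)
    (hP : P.IsHermitian) (h : A * P = P * A) :
    ∃ (U : Matrix (Fin n) (Fin n) ℝ) (a p : Fin n → ℝ), Uᵀ * U = 1 ∧
      A = U * diagonal a * Uᵀ ∧ P = U * diagonal p * Uᵀ := by
  have hc : Commute (toEuclideanLin (𝕜 := ℝ) A) (toEuclideanLin (𝕜 := ℝ) P) := by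
    ext x i
    simp [Module.End.mul_apply, Matrix.toLpLin_apply, h]
  obtain ⟨b, a, p, ha, hp⟩ := joint_basis _ _ (isSymmetric_toEuclideanLin_iff.2 hA)
    (isSymmetric_toEuclideanLin_iff.2 hP) hc
  obtain ⟨U, hUd⟩ : ∃ U : Matrix (Fin n) (Fin n) ℝ, ∀ i j, U i j = b j i := ⟨fun i j => b j i, fun _ _ => rfl⟩
  have hU : Uᵀ * U = 1 := by
    ext i j
    have := orthonormal_iff_ite.1 b.orthonormal i j
    rw [Matrix.mul_apply, Matrix.one_apply, ← this]
    simp only [PiLp.inner_apply, Matrix.transpose_apply, hUd]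
    refine Finset.sum_congr rfl fun x _ => ?_
    simp [mul_comm]
  have hU' : U * Uᵀ = 1 := mul_eq_one_comm.1 hU
  have key : ∀ (M : Matrix (Fin n) (Fin n) ℝ) (c : Fin n → ℝ),
      (∀ j, toEuclideanLin (𝕜 := ℝ) M (b j) = c j • b j) → M = U * diagonal c * Uᵀ := by
    intro M c hM
    have : M * U = U * diagonal c := by
      ext i j
      have := congrArg (fun v : EuclideanSpace ℝ (Fin n) => v i) (hM j)
      rw [mul_diagonal, Matrix.mul_apply, hUd, mul_comm]
      simp only [hUd]
      simpa [Matrix.toLpLin_apply, Matrix.mulVec, dotProduct] using this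
    rw [← this, Matrix.mul_assoc, hU', Matrix.mul_one]
  exact ⟨U, a, p, hU, key A _ ha, key P _ hp⟩

lemma count_eq {n d : ℕ} (X : Matrix (Fin n) (Fin d) ℝ) (U : Matrix (Fin n) (Fin n) ℝ)
    (a : Fin n → ℝ) (hU : Uᵀ * U = 1) (hA : X * Xᵀ = U * diagonal a * Uᵀ) (t : ℝ) (ht : 0 ≤ t) :
    (Finset.univ.filter fun i => t < a i).card =
    (Finset.univ.filter fun i =>
      t < (Matrix.isHermitian_conjTranspose_mul_self X).eigenvalues i).card := by
  classical
  have h1 : (X * Xᵀ).charpoly = (diagonal a).charpoly := by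
    rw [hA, Matrix.mul_assoc, Matrix.charpoly_mul_comm, Matrix.mul_assoc, hU, Matrix.mul_one]
  have h2 := Matrix.charpoly_mul_comm' X Xᵀ
  have hr1 : (X * Xᵀ).charpoly.roots = Multiset.map a Finset.univ.val := by
    rw [h1, Matrix.charpoly_diagonal, Polynomial.roots_prod _ _ (by
      simp [Finset.prod_ne_zero_iff, Polynomial.X_sub_C_ne_zero])]
    simp
  have hr2 : (Xᵀ * X).charpoly.roots = Multiset.map
      (Matrix.isHermitian_conjTranspose_mul_self X).eigenvalues Finset.univ.val := by
    have := (Matrix.isHermitian_conjTranspose_mul_self X).roots_charpoly_eq_eigenvalues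
    simpa using! this
  have h3 := congrArg Polynomial.roots h2
  rw [Polynomial.roots_mul (mul_ne_zero (pow_ne_zero _ Polynomial.X_ne_zero) (Matrix.charpoly_monic _).ne_zero),
    Polynomial.roots_mul (mul_ne_zero (pow_ne_zero _ Polynomial.X_ne_zero) (Matrix.charpoly_monic _).ne_zero),
    hr1, hr2] at h3
  have h4 := congrArg (Multiset.countP (fun x => t < x)) h3
  simp only [Multiset.countP_add, Polynomial.roots_X_pow, Multiset.countP_nsmul,
    Multiset.countP_map] at h4
  have h0 : Multiset.countP (fun x => t < x) {(0:ℝ)} = 0 := by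
    rw [Multiset.countP_eq_zero]; simpa using ht
  simp only [h0, mul_zero, zero_add] at h4
  exact h4

lemma svDesc_count {n d k : ℕ} (X : Matrix (Fin n) (Fin d) ℝ) (hk : k < d) :
    (Finset.univ.filter fun i => svDesc X k ^ 2 <
      (Matrix.isHermitian_conjTranspose_mul_self X).eigenvalues i).card ≤ k := by
  classical
  set l := (Matrix.isHermitian_conjTranspose_mul_self X).eigenvalues with hl
  have hnn : ∀ i, 0 ≤ l i := (Matrix.posSemidef_conjTranspose_mul_self X).eigenvalues_nonneg
  have hs : svDesc X k ^ 2 = l (Tuple.sort l ⟨d - 1 - k, by omega⟩) := by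
    rw [svDesc, dif_pos hk, Real.sq_sqrt (hnn _)]
  rw [hs]
  have hm := Tuple.monotone_sort l
  calc _ ≤ (Finset.Ioi (⟨d - 1 - k, by omega⟩ : Fin d)).card := by
        apply Finset.card_le_card_of_injOn (Tuple.sort l).symm
        · intro i hi
          simp only [Finset.coe_filter, Finset.mem_univ, true_and, Set.mem_ofPred_eq] at hi
          simp only [Finset.coe_Ioi, Set.mem_Ioi]
          by_contra hcon
          have := hm (not_lt.1 hcon)
          simp only [Function.comp, Equiv.apply_symm_apply] at this
          linarith
        · exact (Equiv.injective _).injOn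
    _ ≤ k := by rw [Fin.card_Ioi]; simp only; omega

lemma frob_diag {n : ℕ} (U : Matrix (Fin n) (Fin n) ℝ) (q : Fin n → ℝ) (hU : Uᵀ * U = 1) :
    frobNorm (U * diagonal q * Uᵀ) = Real.sqrt (∑ i, q i ^ 2) := by
  unfold frobNorm
  congr 1
  have : (U * diagonal q * Uᵀ)ᵀ * (U * diagonal q * Uᵀ) = U * (diagonal q * diagonal q * Uᵀ) := by
    simp only [Matrix.transpose_mul, Matrix.transpose_transpose, Matrix.diagonal_transpose,
      Matrix.mul_assoc]
    rw [← Matrix.mul_assoc Uᵀ U, hU, Matrix.one_mul]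
  rw [this, Matrix.trace_mul_comm, Matrix.mul_assoc, hU, Matrix.mul_one, Matrix.diagonal_mul_diagonal,
    Matrix.trace_diagonal]
  simp [sq]

lemma sqrt_triangle {n : ℕ} (f g : Fin n → ℝ) :
    Real.sqrt (∑ i, (f i + g i) ^ 2) ≤ Real.sqrt (∑ i, f i ^ 2) + Real.sqrt (∑ i, g i ^ 2) := by
  have := norm_add_le (WithLp.toLp 2 f : EuclideanSpace ℝ (Fin n)) (WithLp.toLp 2 g)
  simpa [EuclideanSpace.norm_eq] using this

lemma diag_nonneg {n : ℕ} (P U : Matrix (Fin n) (Fin n) ℝ) (p : Fin n → ℝ) (hU : Uᵀ * U = 1)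
    (hP : P.PosSemidef) (h : P = U * diagonal p * Uᵀ) (i : Fin n) : 0 ≤ p i := by
  have h1 := hP.conjTranspose_mul_mul_same U
  have h2 : Uᴴ * P * U = diagonal p := by
    rw [Matrix.conjTranspose_eq_transpose_of_trivial, h, ← Matrix.mul_assoc, ← Matrix.mul_assoc, hU,
      Matrix.one_mul, Matrix.mul_assoc, hU, Matrix.mul_one]
  rw [h2] at h1
  exact Matrix.posSemidef_diagonal_iff.1 h1 i

theorem sgnn_theorem_2
    {n d k : ℕ}
    (P : Matrix (Fin n) (Fin n) ℝ) (hP : P.PosSemidef)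
    (X : Matrix (Fin n) (Fin d) ℝ)
    (hrank : k < X.rank)
    (hcomm : (X * Xᵀ) * (P - X * Xᵀ) = (P - X * Xᵀ) * (X * Xᵀ)) :
    ∃ W : Matrix (Fin d) (Fin k) ℝ,
      frobNorm (P - (P * X * W) * (P * X * W)ᵀ)
        ≤ frobNorm (P - X * Xᵀ) + Real.sqrt (n - k : ℕ) * (svDesc X k) ^ 2 := by
  classical
  have hApsd : (X * Xᵀ).PosSemidef := by
    simpa using Matrix.posSemidef_self_mul_conjTranspose X
  have hc : (X * Xᵀ) * P = P * (X * Xᵀ) := by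
    rw [Matrix.mul_sub, Matrix.sub_mul] at hcomm
    exact sub_left_injective (b := X * Xᵀ * (X * Xᵀ)) hcomm
  obtain ⟨U, a, p, hU, hA, hPd⟩ := joint_diag _ _ hApsd.isHermitian hP.isHermitian hc
  have ha := diag_nonneg _ U a hU hApsd hA
  have hp := diag_nonneg _ U p hU hP hPd
  have hkd : k < d := lt_of_lt_of_le hrank (by simpa using X.rank_le_width)
  have hcard1 : (Finset.univ.filter fun i => svDesc X k ^ 2 < a i).card ≤ k := by
    rw [count_eq X U a hU hA _ (sq_nonneg _)]
    exact svDesc_count X hkd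
  have hcard2 : k ≤ (Finset.univ.filter fun i => 0 < a i).card := by
    have h1 : (X * Xᵀ).rank ≤ (diagonal a).rank := by
      rw [hA]
      exact (Matrix.rank_mul_le_left _ _).trans (Matrix.rank_mul_le_right _ _)
    rw [Matrix.rank_self_mul_transpose, Matrix.rank_diagonal, Fintype.card_subtype] at h1
    have h2 : (Finset.univ.filter fun i => a i ≠ 0) = (Finset.univ.filter fun i => 0 < a i) := by
      ext i; simp [(ha i).lt_iff_ne']
    rw [h2] at h1
    omega
  obtain ⟨S, hS1, hS2, hSk⟩ := Finset.exists_subsuperset_card_eq (n := k)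
    (s := Finset.univ.filter fun i => svDesc X k ^ 2 < a i)
    (t := Finset.univ.filter fun i => 0 < a i)
    (fun i hi => by
      simp only [Finset.mem_filter, Finset.mem_univ, true_and] at hi ⊢
      exact lt_of_le_of_lt (sq_nonneg _) hi) hcard1 hcard2
  let e := S.orderEmbOfFin hSk
  let c : Fin n → ℝ := fun i => (a i * Real.sqrt (p i))⁻¹
  obtain ⟨G, hGd⟩ : ∃ G : Matrix (Fin n) (Fin k) ℝ, ∀ i j, G i j = if i = e j then c i else 0 :=
    ⟨fun i j => if i = e j then c i else 0, fun _ _ => rfl⟩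
  have hG : G * Gᵀ = diagonal (fun i => if i ∈ S then c i ^ 2 else 0) := by
    ext i i'
    simp only [Matrix.mul_apply, Matrix.transpose_apply, Matrix.diagonal_apply, hGd]
    by_cases hii : i = i'
    · subst hii
      simp only [if_true]
      split_ifs with hi
      · have : i ∈ Set.range e := by
          rw [Finset.range_orderEmbOfFin]; exact hi
        obtain ⟨j, hj⟩ := this
        rw [Finset.sum_eq_single j]
        · simp [hj, sq]
        · intro j' _ hne
          have : i ≠ e j' := fun h => hne (e.injective (by rw [hj, ← h]))
          simp [this]
        · simp
      · apply Finset.sum_eq_zero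
        intro j _
        have : i ≠ e j := fun h => hi (h ▸ Finset.orderEmbOfFin_mem S hSk j)
        simp [this]
    · rw [if_neg hii]
      apply Finset.sum_eq_zero
      intro j _
      by_cases h : i = e j
      · have : i' ≠ e j := fun h' => hii (h.trans h'.symm)
        simp [this]
      · simp [h]
  refine ⟨Xᵀ * (U * G), ?_⟩
  have hH : P * X * (Xᵀ * (U * G)) = U * (diagonal (fun i => p i * a i) * G) := by
    calc P * X * (Xᵀ * (U * G)) = P * (X * Xᵀ) * (U * G) := by simp only [Matrix.mul_assoc]
      _ = U * (diagonal p * ((Uᵀ * U) * (diagonal a * ((Uᵀ * U) * G)))) := by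
        rw [hA, hPd]; simp only [Matrix.mul_assoc]
      _ = _ := by
        rw [hU, Matrix.one_mul, Matrix.one_mul, ← Matrix.mul_assoc (diagonal p),
          Matrix.diagonal_mul_diagonal]
  have hHH : (P * X * (Xᵀ * (U * G))) * (P * X * (Xᵀ * (U * G)))ᵀ =
      U * diagonal (fun i => if i ∈ S then p i else 0) * Uᵀ := by
    rw [hH]
    calc _ = U * (diagonal (fun i => p i * a i) * (G * Gᵀ) * diagonal (fun i => p i * a i)) * Uᵀ := by
          simp only [Matrix.transpose_mul, Matrix.diagonal_transpose, Matrix.mul_assoc]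
      _ = _ := by
          rw [hG, Matrix.diagonal_mul_diagonal, Matrix.diagonal_mul_diagonal]
          congr 3
          ext i
          split_ifs with hi
          · have hai : 0 < a i := by simpa using hS2 hi
            rcases (hp i).eq_or_lt with h0 | h0
            · simp [← h0]
            · have hs : Real.sqrt (p i) ^ 2 = p i := Real.sq_sqrt h0.le
              have hs0 : 0 < Real.sqrt (p i) := Real.sqrt_pos.2 h0
              simp only [c]
              rw [inv_pow, mul_pow, hs]
              field_simp
          · simp
  have hdiff : P - (P * X * (Xᵀ * (U * G))) * (P * X * (Xᵀ * (U * G)))ᵀ =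
      U * diagonal (fun i => (if i ∈ S then 0 else p i - a i) + (if i ∈ S then 0 else a i)) * Uᵀ := by
    rw [hHH]
    nth_rewrite 1 [hPd]
    rw [← Matrix.sub_mul, ← Matrix.mul_sub, Matrix.diagonal_sub]
    congr 3
    ext i
    split_ifs <;> simp
  have hE : P - X * Xᵀ = U * diagonal (fun i => p i - a i) * Uᵀ := by
    rw [hA]
    nth_rewrite 1 [hPd]
    rw [← Matrix.sub_mul, ← Matrix.mul_sub, Matrix.diagonal_sub]
  rw [hdiff, hE, frob_diag _ _ hU, frob_diag _ _ hU]
  refine (sqrt_triangle _ _).trans (add_le_add ?_ ?_)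
  · apply Real.sqrt_le_sqrt
    apply Finset.sum_le_sum
    intro i _
    split_ifs
    · simpa using sq_nonneg (p i - a i)
    · exact le_rfl
  · rw [Real.sqrt_le_left (by positivity), mul_pow, Real.sq_sqrt (Nat.cast_nonneg _)]
    calc ∑ i, (if i ∈ S then 0 else a i) ^ 2 = ∑ i ∈ Sᶜ, a i ^ 2 := by
          rw [← Finset.sum_filter_add_sum_filter_not Finset.univ (fun i => i ∈ S)]
          rw [Finset.sum_eq_zero, zero_add]
          · refine Finset.sum_congr (by ext; simp) fun i hi => ?_
            rw [if_neg (by simpa using hi)]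
          · intro i hi
            rw [if_pos (by simpa using hi)]; simp
      _ ≤ ∑ i ∈ Sᶜ, (svDesc X k ^ 2) ^ 2 := by
          apply Finset.sum_le_sum
          intro i hi
          have : a i ≤ svDesc X k ^ 2 := by
            by_contra hcon
            exact (Finset.mem_compl.1 hi) (hS1 (by simpa using hcon))
          exact pow_le_pow_left₀ (ha i) this 2
      _ = _ := by
          rw [Finset.sum_const, Finset.card_compl, hSk, Fintype.card_fin, nsmul_eq_mul]
end

section
/- Let P ∈ R^{n×n} be symmetric positive semidefinite and X ∈ R^{n×d} with rank(X) = r ≤ k, E = P − X X^T and ε = ‖E‖_F. Assume X X^T and E commute (equivalently, share a common orthonormal eigenbasis). Then there exists W ∈ R^{d×k} such that, with H = P X W, ‖P − H H^T‖_F ≤ ε. -/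
open Matrix

lemma aux_factor {n k : ℕ} (B : Matrix (Fin n) (Fin n) ℝ) (hB : B.PosSemidef)
    (hk : B.rank ≤ k) : ∃ K : Matrix (Fin n) (Fin k) ℝ, (B * K) * (B * K)ᵀ = B := by
  classical
  have hH := hB.isHermitian
  rw [hH.rank_eq_card_non_zero_eigs] at hk
  obtain ⟨f⟩ : Nonempty ({i // hH.eigenvalues i ≠ 0} ↪ Fin k) :=
    Function.Embedding.nonempty_of_card_le (by simpa using hk)
  set b := hH.eigenvalues with hb
  have hb0 : ∀ i, 0 ≤ b i := hB.eigenvalues_nonneg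
  set U : Matrix (Fin n) (Fin n) ℝ := (hH.eigenvectorUnitary : Matrix (Fin n) (Fin n) ℝ) with hU
  have hUU : Uᵀ * U = 1 := by
    have := Unitary.coe_star_mul_self hH.eigenvectorUnitary
    simpa [star_eq_conjTranspose] using this
  have hsp : B = U * diagonal b * Uᵀ := by
    have := hH.spectral_theorem
    simpa [Unitary.conjStarAlgAut_apply, star_eq_conjTranspose, Function.comp_def] using this
  let J : Matrix (Fin n) (Fin k) ℝ := fun i j =>
    if h : b i ≠ 0 then (if f ⟨i, h⟩ = j then 1 else 0) else 0
  have hJ : J * Jᵀ = diagonal (fun i => if b i ≠ 0 then (1:ℝ) else 0) := by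
    ext i i'
    rw [Matrix.mul_apply, diagonal_apply]
    simp only [transpose_apply]
    by_cases h : b i ≠ 0
    · by_cases h' : b i' ≠ 0
      · have e : (f ⟨i', h'⟩ = f ⟨i, h⟩) ↔ i = i' := by
          rw [f.injective.eq_iff, Subtype.mk.injEq, eq_comm]
        simp only [J, dif_pos h, dif_pos h', if_pos h]
        simp [e]
      · have : i ≠ i' := by rintro rfl; exact h' h
        simp only [J, dif_neg h', if_neg this]; simp
    · simp [J, h]
  refine ⟨U * diagonal (fun i => (Real.sqrt (b i))⁻¹) * J, ?_⟩
  have e : B * (U * diagonal (fun i => (Real.sqrt (b i))⁻¹) * J)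
      = U * (diagonal (fun i => Real.sqrt (b i))) * J := by
    have : diagonal b * diagonal (fun i => (Real.sqrt (b i))⁻¹)
        = diagonal (fun i => Real.sqrt (b i)) := by
      rw [diagonal_mul_diagonal]
      congr 1; ext i
      rw [← div_eq_mul_inv, Real.div_sqrt]
    rw [hsp, ← this]
    calc _ = U * diagonal b * (Uᵀ * U) * diagonal (fun i => (Real.sqrt (b i))⁻¹) * J := by
          simp only [Matrix.mul_assoc]
      _ = _ := by rw [hUU]; simp only [Matrix.mul_assoc, Matrix.mul_one, Matrix.one_mul]
  rw [e]
  calc _ = U * (diagonal (fun i => Real.sqrt (b i)) * (J * Jᵀ)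
            * diagonal (fun i => Real.sqrt (b i))) * Uᵀ := by
        simp only [Matrix.mul_assoc, transpose_mul, diagonal_transpose]
    _ = B := by
        rw [hJ, diagonal_mul_diagonal, diagonal_mul_diagonal]
        conv_rhs => rw [hsp]
        congr 3; ext i
        by_cases h : b i = 0
        · simp [h]
        · simp [h, Real.mul_self_sqrt (hb0 i)]

lemma aux_pinv {n : ℕ} (A : Matrix (Fin n) (Fin n) ℝ) (hA : A.IsHermitian) :
    ∃ Q : Matrix (Fin n) (Fin n) ℝ, Qᵀ = Q ∧ A * Q * A = A ∧ Q * A * Q = Q ∧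
      ∀ P, A * P = P * A → Q * P = P * Q := by
  classical
  set a := hA.eigenvalues with ha
  set U : Matrix (Fin n) (Fin n) ℝ := (hA.eigenvectorUnitary : Matrix (Fin n) (Fin n) ℝ) with hU
  have hUU : Uᵀ * U = 1 := by
    have := Unitary.coe_star_mul_self hA.eigenvectorUnitary
    simpa [star_eq_conjTranspose] using this
  have hUU' : U * Uᵀ = 1 := mul_eq_one_comm.mp hUU
  have hsp : A = U * diagonal a * Uᵀ := by
    have := hA.spectral_theorem
    simpa [Unitary.conjStarAlgAut_apply, star_eq_conjTranspose, Function.comp_def] using this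
  have key : ∀ M N : Matrix (Fin n) (Fin n) ℝ, (U * M * Uᵀ) * (U * N * Uᵀ) = U * (M * N) * Uᵀ := by
    intro M N
    calc _ = U * M * (Uᵀ * U) * N * Uᵀ := by simp only [Matrix.mul_assoc]
      _ = _ := by rw [hUU]; simp only [Matrix.mul_assoc, Matrix.one_mul]
  refine ⟨U * diagonal (fun i => (a i)⁻¹) * Uᵀ, ?_, ?_, ?_, ?_⟩
  · simp [Matrix.mul_assoc]
  · rw [hsp, key, key, diagonal_mul_diagonal, diagonal_mul_diagonal]
    congr 3; ext i; simp
  · rw [hsp, key, key, diagonal_mul_diagonal, diagonal_mul_diagonal]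
    congr 3; ext i
    by_cases h : a i = 0 <;> simp [h]
  · intro P hP
    obtain ⟨N, rfl⟩ : ∃ N, P = U * N * Uᵀ := ⟨Uᵀ * P * U, by
      calc P = (U * Uᵀ) * P * (U * Uᵀ) := by simp [hUU']
        _ = _ := by simp only [Matrix.mul_assoc]⟩
    rw [hsp, key, key] at hP
    have h2 : diagonal a * N = N * diagonal a := by
      have h3 := congrArg (fun Z => Uᵀ * Z * U) hP
      have k2 : ∀ Z : Matrix (Fin n) (Fin n) ℝ, Uᵀ * (U * Z * Uᵀ) * U = Z := by
        intro Z
        calc _ = (Uᵀ * U) * Z * (Uᵀ * U) := by simp only [Matrix.mul_assoc]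
          _ = _ := by simp [hUU]
      simpa only [k2] using h3
    rw [key, key]
    congr 2
    ext i j
    have h4 := congrFun (congrFun h2 i) j
    rw [diagonal_mul, mul_diagonal] at h4 ⊢
    by_cases h : a i = a j
    · rw [h, mul_comm]
    · have : N i j = 0 := by
        have : (a i - a j) * N i j = 0 := by linarith
        exact (mul_eq_zero.mp this).resolve_left (sub_ne_zero.mpr h)
      simp [this]

/-- If P is symmetric PSD, rank(X) = r ≤ k, and X Xᵀ commutes with
E = P − X Xᵀ, then there exists W such that H = P X W satisfies
‖P − H Hᵀ‖_F ≤ ε = ‖E‖_F. -/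
theorem sgnn_theorem_2_low_rank
    {n d k r : ℕ}
    (P : Matrix (Fin n) (Fin n) ℝ) (hP : P.PosSemidef)
    (X : Matrix (Fin n) (Fin d) ℝ)
    (hrank : X.rank = r) (hr : r ≤ k)
    (hcomm : (X * Xᵀ) * (P - X * Xᵀ) = (P - X * Xᵀ) * (X * Xᵀ)) :
    ∃ W : Matrix (Fin d) (Fin k) ℝ,
      frobNorm (P - (P * X * W) * (P * X * W)ᵀ)
        ≤ frobNorm (P - X * Xᵀ) := by
  set A := X * Xᵀ with hAdef
  have hAt : Aᵀ = A := by simp [hAdef]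
  have hPt : Pᵀ = P := by simpa using hP.isHermitian.eq
  have hAP : A * P = P * A := by
    have := hcomm
    rw [Matrix.mul_sub, Matrix.sub_mul] at this
    exact sub_left_injective this
  obtain ⟨Q, hQt, hAQA, hQAQ, hQ⟩ := aux_pinv A (by simpa [Matrix.IsHermitian] using hAt)
  have hQA : Q * A = A * Q := hQ A rfl
  have hQP := hQ P hAP
  set R := A * Q with hR
  have hRt : Rᵀ = R := by rw [hR, transpose_mul, hAt, hQt, hQA]
  have hRR : R * R = R := by rw [hR, ← Matrix.mul_assoc, hAQA]
  have hAR : A * R = A := by rw [← hQA, ← Matrix.mul_assoc]; exact hAQA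
  have hRA : R * A = A := hAQA
  have hRP : R * P = P * R := by
    rw [hR, Matrix.mul_assoc, hQP, ← Matrix.mul_assoc, hAP, Matrix.mul_assoc]
  have hB : (P * R).PosSemidef := by
    have := hP.conjTranspose_mul_mul_same R
    have e : Rᴴ * P * R = P * R := by
      rw [conjTranspose_eq_transpose_of_trivial, hRt, hRP, Matrix.mul_assoc, hRR]
    rwa [e] at this
  have hfac : P * R = P * X * (Xᵀ * Q) := by
    simp only [hR, hAdef, Matrix.mul_assoc]
  have hrk : (P * R).rank ≤ k := by
    rw [hfac]
    calc _ ≤ (P * X).rank := rank_mul_le_left _ _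
      _ ≤ X.rank := rank_mul_le_right _ _
      _ ≤ k := hrank ▸ hr
  obtain ⟨K, hK⟩ := aux_factor (P * R) hB hrk
  refine ⟨Xᵀ * Q * K, ?_⟩
  rw [← Matrix.mul_assoc, ← hfac, hK]
  unfold frobNorm
  apply Real.sqrt_le_sqrt
  set E := P - A with hE
  have hEt : Eᵀ = E := by rw [hE, transpose_sub, hPt, hAt]
  have hER : R * E = E * R := by rw [hE, Matrix.mul_sub, Matrix.sub_mul, hRP, hRA, hAR]
  have h1 : P - P * R = E - E * R := by
    rw [hE, Matrix.sub_mul, hAR]; abel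
  have h3 : Eᵀ * E = (E - E * R)ᵀ * (E - E * R) + (E * R)ᵀ * (E * R) := by
    have h5 : E * R * (E * R) = E * E * R := by
      rw [Matrix.mul_assoc, ← Matrix.mul_assoc R, hER, Matrix.mul_assoc E R R, hRR,
        Matrix.mul_assoc]
    have h6 : E * R * E = E * E * R := by
      rw [Matrix.mul_assoc, hER, Matrix.mul_assoc]
    simp only [transpose_sub, transpose_mul, hEt, hRt, hER, Matrix.sub_mul, Matrix.mul_sub]
    rw [h5, h6, ← Matrix.mul_assoc E E R]
    abel
  have h4 : 0 ≤ ((E * R)ᵀ * (E * R)).trace := by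
    have := (posSemidef_conjTranspose_mul_self (E * R)).trace_nonneg
    simpa only [conjTranspose_eq_transpose_of_trivial] using this
  rw [h1, h3, trace_add]
  linarith
end
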